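/- In the Gaussian sequence model, for any q ≥ 1, σ > 0, a > 0 and integers 1 ≤ s < p: inf over measurable estimators β̂ : ℝ^p → ℝ^p of sup_{β ∈ Ω^p_{s,a}} E_β‖β̂(Y) − β‖_q^q ≥ max( s σ_q^q , a^q · 2^{−(q+1)} · ψ(p,s,a,σ) − s a^q e^{−s/8} ). -/

import Mathlib

/-!
Both terms of the maximum bound the minimax risk from below by an average of the risk under a prior
with independent coordinates; `sum_le_maxRisk` reduces such an average to scalar Bayes problems.
The prior need not live on the sparse set. It suffices that, with probability `P(H)`, it stays there
when any single coordinate is redrawn: conditionally on the other coordinates, coordinate `j` is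
then a scalar problem, so the maximal risk is at least `P(H)` times the sum of the scalar Bayes
risks.

* The term `s σ_q^q` (`minimax_ge_sigmaqq`): the first `s` coordinates are uniform on `[a, a + L]`,
  the others vanish, and `P(H) = 1`. For observations away from the ends of the interval, the error
  is, up to truncation, a fixed shift of the symmetric noise, and by convexity a shift cannot
  decrease the `q`-th absolute moment (`trunc_moment_le`). Letting `L → ∞` gives `σ_q^q` for each coordinate.
* The term with `ψ` (`minimax_ge_psi`): every coordinate is `a` with probability `s / (2p)` and `0`
  otherwise. A scalar estimate is at distance at least `a / 2` from `0` or from `a`, so the scalar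
  Bayes risk is at least `(a/2)^q` times the overlap of the weighted densities (`twoPoint_bayes`),
  and `p` such overlaps add up to at least `ψ / 2`, because `t(a)` is where the densities with
  weights `p - s` and `s` cross (`ofReal_psi_le`). Here `H` is the event of at most `s - 1` nonzero
  coordinates, and a Chernoff bound gives `P(H) ≥ 1 - e^{-s/8}` (`sparse_prob`). Since `ψ ≤ s`, the
  factor `P(H)` costs at most the subtracted term.
-/

open MeasureTheory ProbabilityTheory Filter
open scoped ENNReal NNReal BigOperators Classical

noncomputable section

/-- The Gaussian distribution `N(m, σ²)` on `ℝ`. -/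
def gauss (m σ : ℝ) : Measure ℝ := gaussianReal m ⟨σ ^ 2, sq_nonneg σ⟩

/-- The standard Gaussian distribution on `ℝ`. -/
def stdG : Measure ℝ := gaussianReal 0 1

/-- The Gaussian sequence model: `Y` has independent coordinates `Y j ~ N(β j, σ²)`. -/
def seqModel (p : ℕ) (σ : ℝ) (β : Fin p → ℝ) : Measure (Fin p → ℝ) :=
  Measure.pi fun j => gauss (β j) σ

/-- `Ω^p_{s,a}`: `s`-sparse vectors with nonzero coordinates at least `a` in absolute value. -/
def sparseSet (p s : ℕ) (a : ℝ) : Set (Fin p → ℝ) :=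
  {β | (Finset.univ.filter fun i => β i ≠ 0).card ≤ s ∧ ∀ i, β i ≠ 0 → a ≤ |β i|}

/-- The risk `E_β ‖est(Y) − β‖_q^q` in the Gaussian sequence model. -/
def seqRisk (p : ℕ) (σ q : ℝ) (est : (Fin p → ℝ) → Fin p → ℝ) (β : Fin p → ℝ) : ℝ≥0∞ :=
  ∫⁻ y, ENNReal.ofReal (∑ j, |est y j - β j| ^ q) ∂(seqModel p σ β)

/-- The maximal risk over `Ω^p_{s,a}`. -/
def maxRisk (p s : ℕ) (σ q a : ℝ) (est : (Fin p → ℝ) → Fin p → ℝ) : ℝ≥0∞ :=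
  ⨆ β ∈ sparseSet p s a, seqRisk p σ q est β

/-- The minimax risk over `Ω^p_{s,a}` in the Gaussian sequence model. -/
def minimax (p s : ℕ) (σ q a : ℝ) : ℝ≥0∞ :=
  ⨅ (est : (Fin p → ℝ) → Fin p → ℝ) (_ : Measurable est), maxRisk p s σ q a est

/-- `σ_q^q = E|η|^q` where `η ~ N(0, σ²)`. -/
def sigmaqq (σ q : ℝ) : ℝ := ∫ x, |x| ^ q ∂(gauss 0 σ)

/-- `P(σ ε > t)` for a standard Gaussian `ε`. -/
def PgtS (σ t : ℝ) : ℝ := (stdG {x | t < σ * x}).toReal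

/-- `P(σ ε ≥ t)` for a standard Gaussian `ε`. -/
def PgeS (σ t : ℝ) : ℝ := (stdG {x | t ≤ σ * x}).toReal

/-- The threshold `t(a) = a/2 + σ² log(p/s − 1)/a`. -/
def tFun (p s : ℕ) (σ a : ℝ) : ℝ := a / 2 + σ ^ 2 * Real.log ((p : ℝ) / s - 1) / a

/-- `t* = σ √(2 log(p/s − 1))`. -/
def tStar (p s : ℕ) (σ : ℝ) : ℝ := σ * Real.sqrt (2 * Real.log ((p : ℝ) / s - 1))

/-- `ψ(p,s,a,σ) = (p−s) P(σε > t(a)) + s P(σε > a − t(a))`. -/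
def psi (p s : ℕ) (σ a : ℝ) : ℝ :=
  ((p : ℝ) - s) * PgtS σ (tFun p s σ a) + s * PgtS σ (a - tFun p s σ a)

/-- `ψ₊(p,s,a,σ) = (p−s) P(σε > t(a)) + s P(σε > (a − t(a))₊)`. -/
def psiPlus (p s : ℕ) (σ a : ℝ) : ℝ :=
  ((p : ℝ) - s) * PgtS σ (tFun p s σ a) + s * PgtS σ (max (a - tFun p s σ a) 0)

/-- The hard-thresholding estimator at level `τ`. -/
def hardThr (p : ℕ) (τ : ℝ) : (Fin p → ℝ) → Fin p → ℝ :=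
  fun y j => if τ ≤ |y j| then y j else 0


/-! ### Reduction to scalar Bayes risks -/

lemma gauss_eq (m σ : ℝ) : gauss m σ = gaussianReal m (σ ^ 2).toNNReal := by
  have h : (⟨σ ^ 2, sq_nonneg σ⟩ : ℝ≥0) = (σ ^ 2).toNNReal :=
    NNReal.eq (Real.coe_toNNReal _ (sq_nonneg σ)).symm
  exact congrArg (gaussianReal m) h

instance gauss_isProbabilityMeasure (m σ : ℝ) : IsProbabilityMeasure (gauss m σ) := by
  rw [gauss_eq]; infer_instance

/-- Redrawing one coordinate independently leaves an integral against a product law unchanged. -/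
lemma lintegral_pi_resample {n : ℕ} {X : Type*} [MeasurableSpace X]
    (Q : Fin n → Measure X) [∀ i, IsProbabilityMeasure (Q i)]
    (f : (Fin n → X) → ℝ≥0∞) (hf : Measurable f) (j : Fin n) :
    ∫⁻ x, f x ∂(Measure.pi Q)
      = ∫⁻ x, (∫⁻ u, f (Function.update x j u) ∂(Q j)) ∂(Measure.pi Q) := by
  refine lintegral_eq_of_lmarginal_eq {j} hf ?_ ?_
  · have := hf.lmarginal Q (s := {j})
    simpa [lmarginal_singleton] using this
  · rw [lmarginal_singleton, lmarginal_singleton]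
    ext x
    simp

lemma gauss_eq_map (m σ : ℝ) : gauss m σ = (gauss 0 σ).map (fun z => m + z) := by
  rw [gauss_eq, gauss_eq, gaussianReal_map_const_add]; simp

lemma seqModel_eq_map (p : ℕ) (σ : ℝ) (β : Fin p → ℝ) :
    seqModel p σ β = (Measure.pi fun _ : Fin p => gauss 0 σ).map (fun z => β + z) := by
  unfold seqModel
  have := Measure.pi_map_pi (μ := fun _ : Fin p => gauss 0 σ) (f := fun i z => β i + z)
    (fun i => by fun_prop)
  simp_rw [← gauss_eq_map] at this
  exact this.symm

lemma seqRisk_eq (p : ℕ) (σ q : ℝ) (est : (Fin p → ℝ) → Fin p → ℝ) (hest : Measurable est)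
    (β : Fin p → ℝ) :
    seqRisk p σ q est β = ∑ j, ∫⁻ z, ENNReal.ofReal (|est (β + z) j - β j| ^ q)
      ∂(Measure.pi fun _ : Fin p => gauss 0 σ) := by
  unfold seqRisk
  rw [seqModel_eq_map, lintegral_map (by fun_prop) (by fun_prop), ← lintegral_finsetSum _ (by fun_prop)]
  refine lintegral_congr fun z => ?_
  rw [ENNReal.ofReal_sum_of_nonneg]
  · intros; positivity

lemma measurableSet_sparseSet (p s : ℕ) (a : ℝ) : MeasurableSet (sparseSet p s a) := by
  unfold sparseSet
  have h : ∀ i : Fin p, MeasurableSet {β : Fin p → ℝ | β i ≠ 0} := fun i =>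
    (measurableSet_singleton (0 : ℝ)).compl.preimage (measurable_pi_apply i)
  have hc : Measurable fun β : Fin p → ℝ => (Finset.univ.filter fun i => β i ≠ 0).card := by
    simp_rw [Finset.card_filter]
    exact Finset.measurable_sum _ fun i _ =>
      Measurable.ite (h i) measurable_const measurable_const
  refine (measurableSet_le hc measurable_const).inter ?_
  show MeasurableSet {β : Fin p → ℝ | ∀ i, β i ≠ 0 → a ≤ |β i|}
  simp only [Set.ofPred_forall, imp_iff_not_or, Set.ofPred_or]
  exact MeasurableSet.iInter fun i => (h i).compl.union
    (measurableSet_le measurable_const (by fun_prop))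

/-- Reduction to scalar Bayes risks. Take a prior with independent coordinates `ν j`, and let `H` be
a set of parameters that remain in the sparse set when any one coordinate is redrawn from its prior.
If `c j` bounds from below the Bayes risk of every scalar estimator under the prior `ν j`, then the
maximal risk is at least `(∑ c j) · P(H)`: conditionally on all coordinates but the `j`-th, the
`j`-th component of the estimator is a scalar estimator, and on the event `H` redrawing `β j` does
not leave the sparse set. -/
lemma sum_le_maxRisk (p s : ℕ) (σ q a : ℝ) (est : (Fin p → ℝ) → Fin p → ℝ)
    (hest : Measurable est) (ν : Fin p → Measure ℝ) [∀ i, IsProbabilityMeasure (ν i)]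
    (H : Set (Fin p → ℝ)) (hH : MeasurableSet H) (c : Fin p → ℝ≥0∞)
    (hupd : ∀ j, ∀ β ∈ H, ∀ᵐ b ∂(ν j), Function.update β j b ∈ sparseSet p s a)
    (hc : ∀ j, ∀ T : ℝ → ℝ, Measurable T →
      c j ≤ ∫⁻ b, ∫⁻ z, ENNReal.ofReal (|T (b + z) - b| ^ q) ∂(gauss 0 σ) ∂(ν j)) :
    (∑ j, c j) * Measure.pi ν H ≤ maxRisk p s σ q a est := by
  classical
  set P := Measure.pi fun _ : Fin p => gauss 0 σ with hP
  set Ω := sparseSet p s a with hΩ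
  have hΩm : MeasurableSet Ω := measurableSet_sparseSet p s a
  -- Prior mass outside the sparse set is discarded.
  have h1 : ∫⁻ β, Ω.indicator (fun β => seqRisk p σ q est β) β ∂(Measure.pi ν)
      ≤ maxRisk p s σ q a est := by
    calc _ ≤ ∫⁻ β, maxRisk p s σ q a est ∂(Measure.pi ν) := by
          refine lintegral_mono fun β => ?_
          by_cases hb : β ∈ Ω
          · rw [Set.indicator_of_mem hb]
            exact le_iSup₂_of_le β hb le_rfl
          · rw [Set.indicator_of_notMem hb]; exact zero_le
      _ = _ := by simp
  refine le_trans ?_ h1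
  let f : Fin p → (Fin p → ℝ) → (Fin p → ℝ) → ℝ≥0∞ := fun j β z =>
    Ω.indicator (fun β => ENNReal.ofReal (|est (β + z) j - β j| ^ q)) β
  have hf : ∀ j, Measurable fun x : (Fin p → ℝ) × (Fin p → ℝ) => f j x.1 x.2 := by
    intro j
    have : (fun x : (Fin p → ℝ) × (Fin p → ℝ) => f j x.1 x.2)
        = (Prod.fst ⁻¹' Ω).indicator
          (fun x => ENNReal.ofReal (|est (x.1 + x.2) j - x.1 j| ^ q)) := by
      ext x; simp [f, Set.indicator]
    rw [this]
    exact Measurable.indicator (by fun_prop) (measurable_fst hΩm)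
  have h2 : ∀ β, Ω.indicator (fun β => seqRisk p σ q est β) β = ∑ j, ∫⁻ z, f j β z ∂P := by
    intro β
    by_cases hb : β ∈ Ω
    · simp only [f, Set.indicator_of_mem hb]
      exact seqRisk_eq p σ q est hest β
    · simp [f, Set.indicator_of_notMem hb]
  simp_rw [h2]
  rw [lintegral_finsetSum _ (fun j _ => (hf j).lintegral_prod_right'), Finset.sum_mul]
  refine Finset.sum_le_sum fun j _ => ?_
  have h3 : ∫⁻ β, ∫⁻ z, f j β z ∂P ∂(Measure.pi ν)
      = ∫⁻ β, ∫⁻ z, ∫⁻ b, ∫⁻ w, f j (Function.update β j b) (Function.update z j w)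
        ∂(gauss 0 σ) ∂(ν j) ∂P ∂(Measure.pi ν) := by
    rw [lintegral_pi_resample ν _ (hf j).lintegral_prod_right' j]
    refine lintegral_congr fun β => ?_
    have : ∀ b, ∫⁻ z, f j (Function.update β j b) z ∂P
        = ∫⁻ z, ∫⁻ w, f j (Function.update β j b) (Function.update z j w) ∂(gauss 0 σ) ∂P :=
      fun b => lintegral_pi_resample (fun _ : Fin p => gauss 0 σ) _
        ((hf j).comp (measurable_const.prodMk measurable_id)) j
    simp_rw [this]
    rw [lintegral_lintegral_swap]
    refine Measurable.aemeasurable ?_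
    refine Measurable.lintegral_prod_right'
      (f := fun x : (ℝ × (Fin p → ℝ)) × ℝ =>
        f j (Function.update β j x.1.1) (Function.update x.1.2 j x.2)) ?_
    refine (hf j).comp (Measurable.prodMk ?_ ?_)
    · exact (measurable_update β).comp (measurable_fst.comp measurable_fst)
    · exact measurable_update'.comp ((measurable_snd.comp measurable_fst).prodMk measurable_snd)
  rw [h3]
  calc c j * Measure.pi ν H = ∫⁻ β, H.indicator (fun _ => c j) β ∂(Measure.pi ν) := by
        rw [lintegral_indicator_const hH]
    _ ≤ _ := by
        refine lintegral_mono fun β => ?_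
        by_cases hb : β ∈ H
        · rw [Set.indicator_of_mem hb]
          calc c j = ∫⁻ z, c j ∂P := by simp
            _ ≤ _ := by
              refine lintegral_mono fun z => ?_
              refine (hc j (fun y => est (Function.update (β + z) j y) j) ?_).trans ?_
              · exact (measurable_pi_apply j).comp (hest.comp (measurable_update _))
              · refine lintegral_mono_ae ?_
                filter_upwards [hupd j β hb] with b hbΩ
                refine le_of_eq (lintegral_congr fun w => ?_)
                simp only [f, Set.indicator_of_mem hbΩ, Function.update_self]
                rw [← Function.update_add]
        · rw [Set.indicator_of_notMem hb]; exact zero_le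

/-! ### The scalar location model over a long interval -/

/-- The uniform distribution on `[a, a + L]`. -/
def unif (a L : ℝ) : Measure ℝ :=
  (ENNReal.ofReal L)⁻¹ • (volume : Measure ℝ).restrict (Set.Icc a (a + L))

lemma unif_isProbabilityMeasure (a L : ℝ) (hL : 0 < L) : IsProbabilityMeasure (unif a L) := by
  constructor
  simp only [unif, Measure.smul_apply, Measure.restrict_apply MeasurableSet.univ, Set.univ_inter,
    Real.volume_Icc, smul_eq_mul, add_sub_cancel_left]
  exact ENNReal.inv_mul_cancel (by simpa using hL) ENNReal.ofReal_ne_top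

lemma gauss_map_neg (σ : ℝ) : (gauss 0 σ).map (fun x => -x) = gauss 0 σ := by
  rw [gauss_eq, gaussianReal_map_neg]; simp

lemma two_mul_rpow_le (q : ℝ) (hq : 1 ≤ q) (t z : ℝ) :
    2 * |z| ^ q ≤ |t + z| ^ q + |t - z| ^ q := by
  have hc := (convexOn_rpow hq).2 (abs_nonneg (t + z) : |t + z| ∈ Set.Ici 0)
    (abs_nonneg (t - z) : |t - z| ∈ Set.Ici 0) (by norm_num : (0 : ℝ) ≤ 1 / 2)
    (by norm_num : (0 : ℝ) ≤ 1 / 2) (by norm_num)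
  simp only [smul_eq_mul] at hc
  have h : |z| ≤ 1 / 2 * |t + z| + 1 / 2 * |t - z| := by
    have := abs_sub (t + z) (t - z)
    rw [show t + z - (t - z) = 2 * z by ring, abs_mul] at this
    norm_num at this
    linarith
  have := Real.rpow_le_rpow (abs_nonneg z) h (by linarith : 0 ≤ q)
  linarith

/-- No deterministic shift reduces the truncated `q`-th moment: average the losses at
`z` and `-z`, and use convexity of `|·|^q`. -/
lemma trunc_moment_le (q σ M t : ℝ) (hq : 1 ≤ q) :
    ∫⁻ z in Set.Icc (-M) M, ENNReal.ofReal (|z| ^ q) ∂(gauss 0 σ)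
      ≤ ∫⁻ z in Set.Icc (-M) M, ENNReal.ofReal (|t + z| ^ q) ∂(gauss 0 σ) := by
  have hneg : ∫⁻ z in Set.Icc (-M) M, ENNReal.ofReal (|t + z| ^ q) ∂(gauss 0 σ)
      = ∫⁻ z in Set.Icc (-M) M, ENNReal.ofReal (|t - z| ^ q) ∂(gauss 0 σ) := by
    conv_lhs => rw [← gauss_map_neg σ]
    rw [setLIntegral_map measurableSet_Icc (by fun_prop) (by fun_prop)]
    have : (fun x : ℝ => -x) ⁻¹' Set.Icc (-M) M = Set.Icc (-M) M := by
      ext x; simp only [Set.mem_preimage, Set.mem_Icc]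
      constructor <;> rintro ⟨h1, h2⟩ <;> constructor <;> linarith
    rw [this]
    simp only [sub_eq_add_neg]
  have h2 : 2 * ∫⁻ z in Set.Icc (-M) M, ENNReal.ofReal (|z| ^ q) ∂(gauss 0 σ)
      ≤ 2 * ∫⁻ z in Set.Icc (-M) M, ENNReal.ofReal (|t + z| ^ q) ∂(gauss 0 σ) := by
    conv_rhs => rw [two_mul]
    nth_rewrite 2 [hneg]
    rw [← lintegral_const_mul _ (by fun_prop), ← lintegral_add_left (by fun_prop)]
    refine lintegral_mono fun z => ?_
    rw [← ENNReal.ofReal_add (by positivity) (by positivity),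
      show (2 : ℝ≥0∞) = ENNReal.ofReal 2 by simp, ← ENNReal.ofReal_mul (by norm_num)]
    exact ENNReal.ofReal_le_ofReal (two_mul_rpow_le q hq t z)
  exact (ENNReal.mul_le_mul_iff_right (by simp) (by simp)).1 h2

/-- Under the uniform prior on `[a, a + L]` the Bayes risk of a scalar estimator `T` is at least
`(L - 2M) / L` times the truncated `q`-th moment. After substituting `y = b + z`, an observation `y`
in `[a + M, a + L - M]` leaves every `b = y - z` with `|z| ≤ M` in the support of the prior, and
for such `y` the error is `(T y - y) + z`, a shift of the noise. -/
lemma unif_bayes (q σ a L M : ℝ) (hq : 1 ≤ q) (hL : 0 < L) (T : ℝ → ℝ) (hT : Measurable T) :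
    ENNReal.ofReal ((L - 2 * M) / L)
        * ∫⁻ z in Set.Icc (-M) M, ENNReal.ofReal (|z| ^ q) ∂(gauss 0 σ)
      ≤ ∫⁻ b, ∫⁻ z, ENNReal.ofReal (|T (b + z) - b| ^ q) ∂(gauss 0 σ) ∂(unif a L) := by
  set K := ∫⁻ z in Set.Icc (-M) M, ENNReal.ofReal (|z| ^ q) ∂(gauss 0 σ) with hK
  set I := Set.Icc a (a + L) with hI
  set J := Set.Icc (a + M) (a + L - M) with hJ
  have hIm : MeasurableSet I := measurableSet_Icc
  have key : ENNReal.ofReal (L - 2 * M) * K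
      ≤ ∫⁻ b in I, ∫⁻ z, ENNReal.ofReal (|T (b + z) - b| ^ q) ∂(gauss 0 σ) := by
    have e1 : ∫⁻ b in I, ∫⁻ z, ENNReal.ofReal (|T (b + z) - b| ^ q) ∂(gauss 0 σ)
        = ∫⁻ z, ∫⁻ b, I.indicator (fun b => ENNReal.ofReal (|T (b + z) - b| ^ q)) b
          ∂volume ∂(gauss 0 σ) := by
      rw [lintegral_lintegral_swap (by fun_prop)]
      refine lintegral_congr fun z => ?_
      rw [lintegral_indicator hIm]
    have e2 : ∀ z, ∫⁻ b, I.indicator (fun b => ENNReal.ofReal (|T (b + z) - b| ^ q)) b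
        = ∫⁻ y, I.indicator (fun b => ENNReal.ofReal (|T (b + z) - b| ^ q)) (y - z) :=
      fun z => (lintegral_sub_right_eq_self _ z).symm
    rw [e1]
    simp_rw [e2]
    rw [lintegral_lintegral_swap]
    · calc ENNReal.ofReal (L - 2 * M) * K = ∫⁻ y in J, K := by
            rw [setLIntegral_const, hJ, Real.volume_Icc, mul_comm]; congr 2; ring
        _ ≤ ∫⁻ y in J, ∫⁻ z, I.indicator
              (fun b => ENNReal.ofReal (|T (b + z) - b| ^ q)) (y - z) ∂(gauss 0 σ) := by
            refine setLIntegral_mono' measurableSet_Icc fun y hy => ?_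
            refine (trunc_moment_le q σ M (T y - y) hq).trans ?_
            refine le_trans ?_ (setLIntegral_le_lintegral (Set.Icc (-M) M) _)
            refine setLIntegral_mono' measurableSet_Icc fun z hz => ?_
            have hm : y - z ∈ I := by
              simp only [hJ, hI, Set.mem_Icc] at *
              constructor <;> linarith [hy.1, hy.2, hz.1, hz.2]
            rw [Set.indicator_of_mem hm]
            refine le_of_eq ?_
            congr 3
            rw [sub_add_cancel]; ring
        _ ≤ _ := setLIntegral_le_lintegral _ _
    · refine Measurable.aemeasurable ?_
      have : (Function.uncurry fun z y : ℝ => I.indicator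
            (fun b => ENNReal.ofReal (|T (b + z) - b| ^ q)) (y - z))
          = ((fun x : ℝ × ℝ => x.2 - x.1) ⁻¹' I).indicator
            (fun x => ENNReal.ofReal (|T (x.2 - x.1 + x.1) - (x.2 - x.1)| ^ q)) := by
        ext x; simp [Function.uncurry, Set.indicator]
      rw [this]
      exact Measurable.indicator (by fun_prop)
        ((measurable_snd.sub measurable_fst) hIm)
  rw [unif, lintegral_smul_measure, smul_eq_mul, ENNReal.ofReal_div_of_pos hL, div_eq_mul_inv,
    mul_comm _ (ENNReal.ofReal L)⁻¹, mul_assoc]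
  gcongr

lemma card_filter_val_lt {p s : ℕ} (hsp : s < p) :
    (Finset.univ.filter fun i : Fin p => (i : ℕ) < s).card = s := by
  have h := Fin.card_filter_val_lt (n := p) (m := s)
  simpa [hsp.le] using h

/-- Lower bound from the prior with independent uniform laws on `[a, a + L]` on the first `s`
coordinates and zeros elsewhere. -/
lemma minimax_ge_trunc (q σ a L M : ℝ) (hq : 1 ≤ q) (hL : 0 < L)
    (s p : ℕ) (hsp : s < p) :
    (s : ℝ≥0∞) * (ENNReal.ofReal ((L - 2 * M) / L)
        * ∫⁻ z in Set.Icc (-M) M, ENNReal.ofReal (|z| ^ q) ∂(gauss 0 σ))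
      ≤ minimax p s σ q a := by
  refine le_iInf₂ fun est hest => ?_
  set C := ENNReal.ofReal ((L - 2 * M) / L)
        * ∫⁻ z in Set.Icc (-M) M, ENNReal.ofReal (|z| ^ q) ∂(gauss 0 σ) with hC
  let ν : Fin p → Measure ℝ := fun i => if (i : ℕ) < s then unif a L else Measure.dirac 0
  let A : Fin p → Set ℝ := fun i => if (i : ℕ) < s then Set.Icc a (a + L) else {0}
  have : ∀ i, IsProbabilityMeasure (ν i) := by
    intro i
    by_cases h : (i : ℕ) < s
    · simp only [ν, h, if_true]; exact unif_isProbabilityMeasure a L hL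
    · simp only [ν, h, if_false]; infer_instance
  have hAm : ∀ i, MeasurableSet (A i) := by
    intro i; by_cases h : (i : ℕ) < s <;> simp [A, h]
  have hνA : ∀ i, ∀ᵐ b ∂(ν i), b ∈ A i := by
    intro i
    by_cases h : (i : ℕ) < s
    · simp only [ν, A, h, if_true, unif]
      exact Measure.ae_smul_measure (ae_restrict_mem measurableSet_Icc) _
    · simp only [ν, A, h, if_false]
      rw [ae_dirac_eq]; simp
  have hsub : ∀ β : Fin p → ℝ, (∀ i, β i ∈ A i) → β ∈ sparseSet p s a := by
    intro β hβ
    have hz : ∀ i, β i ≠ 0 → (i : ℕ) < s := by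
      intro i hi
      by_contra h
      have := hβ i
      simp only [A, h, if_false, Set.mem_singleton_iff] at this
      exact hi this
    refine ⟨?_, fun i hi => ?_⟩
    · calc _ ≤ (Finset.univ.filter fun i : Fin p => (i : ℕ) < s).card :=
            Finset.card_le_card fun i => by simpa using hz i
        _ = s := card_filter_val_lt hsp
    · have := hβ i
      simp only [A, hz i hi, if_true, Set.mem_Icc] at this
      exact this.1.trans (le_abs_self _)
  have main := sum_le_maxRisk p s σ q a est hest ν (Set.pi Set.univ A)
    (MeasurableSet.univ_pi hAm) (fun j => if (j : ℕ) < s then C else 0) ?_ ?_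
  · have h1 : Measure.pi ν (Set.pi Set.univ A) = 1 := by
      rw [Measure.pi_pi]
      refine Finset.prod_eq_one fun i _ => ?_
      exact (mem_ae_iff_prob_eq_one (hAm i)).1 (hνA i)
    rw [h1, mul_one, ← Finset.sum_filter, Finset.sum_const, card_filter_val_lt hsp,
      nsmul_eq_mul] at main
    exact main
  · intro j β hβ
    filter_upwards [hνA j] with b hb
    refine hsub _ fun i => ?_
    by_cases h : i = j
    · subst h; simpa using hb
    · rw [Function.update_of_ne h]; exact hβ i (Set.mem_univ i)
  · intro j T hT
    by_cases h : (j : ℕ) < s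
    · simp only [h, if_true, ν]
      exact unif_bayes q σ a L M hq hL T hT
    · simp [h]

lemma minimax_ge_sigmaqq (q σ a : ℝ) (hq : 1 ≤ q) (s p : ℕ) (hsp : s < p) :
    ENNReal.ofReal ((s : ℝ) * sigmaqq σ q) ≤ minimax p s σ q a := by
  -- Only `≤` is needed, so integrability of `|x|^q` plays no role.
  have hfull : ENNReal.ofReal (sigmaqq σ q) ≤ ∫⁻ z, ENNReal.ofReal (|z| ^ q) ∂(gauss 0 σ) := by
    unfold sigmaqq
    rw [integral_eq_lintegral_of_nonneg_ae (ae_of_all _ fun x => by positivity)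
      (by fun_prop : Measurable fun x : ℝ => |x| ^ q).aestronglyMeasurable]
    exact ENNReal.ofReal_toReal_le
  rw [ENNReal.ofReal_mul (by positivity), ENNReal.ofReal_natCast]
  refine le_trans (mul_le_mul_right hfull _) ?_
  -- With truncation `M = n` and prior length `L = (n + 1)²`, both `M → ∞` and `M / L → 0`.
  have hlim : Tendsto (fun n : ℕ => ENNReal.ofReal ((((n : ℝ) + 1) ^ 2 - 2 * n) / ((n : ℝ) + 1) ^ 2))
      atTop (nhds 1) := by
    have h0 : Tendsto (fun n : ℕ => 1 / ((n : ℝ) + 1)) atTop (nhds 0) :=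
      tendsto_one_div_add_atTop_nhds_zero_nat
    have h1 : Tendsto (fun n : ℕ => 1 - 2 * (1 / ((n : ℝ) + 1)) + 2 * (1 / ((n : ℝ) + 1)) ^ 2)
        atTop (nhds 1) := by
      have := ((tendsto_const_nhds (x := (1 : ℝ))).sub (h0.const_mul 2)).add ((h0.pow 2).const_mul 2)
      simpa using this
    have h2 := ENNReal.tendsto_ofReal h1
    rw [ENNReal.ofReal_one] at h2
    refine h2.congr fun n => ?_
    congr 1
    have : (n : ℝ) + 1 ≠ 0 := by positivity
    field_simp
    ring
  have hK : Tendsto (fun n : ℕ => ∫⁻ z in Set.Icc (-(n : ℝ)) n, ENNReal.ofReal (|z| ^ q) ∂(gauss 0 σ))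
      atTop (nhds (∫⁻ z, ENNReal.ofReal (|z| ^ q) ∂(gauss 0 σ))) := by
    have hu : (⋃ n : ℕ, Set.Icc (-(n : ℝ)) n) = Set.univ := by
      refine Set.eq_univ_of_forall fun x => ?_
      obtain ⟨n, hn⟩ := exists_nat_ge |x|
      exact Set.mem_iUnion.2 ⟨n, abs_le.1 hn⟩
    have hm : Monotone fun n : ℕ => Set.Icc (-(n : ℝ)) n := by
      intro m n hmn
      have : (m : ℝ) ≤ n := by exact_mod_cast hmn
      exact Set.Icc_subset_Icc (by linarith) this
    rw [← setLIntegral_univ, ← hu, setLIntegral_iUnion_of_directed _ hm.directed_le]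
    exact tendsto_atTop_iSup fun m n hmn => lintegral_mono_set (hm hmn)
  have hprod := ENNReal.Tendsto.mul hlim (Or.inl one_ne_zero) hK (Or.inr ENNReal.one_ne_top)
  rw [one_mul] at hprod
  have := ENNReal.Tendsto.const_mul (a := (s : ℝ≥0∞)) hprod (Or.inr (ENNReal.natCast_ne_top s))
  exact le_of_tendsto' this fun n =>
    minimax_ge_trunc q σ a (((n : ℝ) + 1) ^ 2) n hq (by positivity) s p hsp

/-! ### The two-point prior -/

lemma gauss_eq_withDensity (m σ : ℝ) (hσ : 0 < σ) :
    gauss m σ = volume.withDensity (gaussianPDF m (σ ^ 2).toNNReal) := by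
  rw [gauss_eq, gaussianReal_of_var_ne_zero]
  simpa using hσ.ne'

/-- The law `(1 - γ) δ₀ + γ δ_a`, a probability measure when `0 ≤ γ ≤ 1`. -/
def twoPoint (γ a : ℝ) : Measure ℝ :=
  ENNReal.ofReal (1 - γ) • Measure.dirac 0 + ENNReal.ofReal γ • Measure.dirac a

lemma lintegral_twoPoint (γ a : ℝ) (f : ℝ → ℝ≥0∞) :
    ∫⁻ b, f b ∂(twoPoint γ a) = ENNReal.ofReal (1 - γ) * f 0 + ENNReal.ofReal γ * f a := by
  simp [twoPoint, lintegral_add_measure, lintegral_smul_measure]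

lemma twoPoint_isProbabilityMeasure (γ a : ℝ) (h0 : 0 ≤ γ) (h1 : γ ≤ 1) :
    IsProbabilityMeasure (twoPoint γ a) := by
  constructor
  have := lintegral_twoPoint γ a (fun _ => 1)
  rw [lintegral_one] at this
  rw [this, mul_one, mul_one, ← ENNReal.ofReal_add (by linarith) h0]
  simp

lemma ae_twoPoint (γ a : ℝ) : ∀ᵐ b ∂(twoPoint γ a), b = 0 ∨ b = a := by
  rw [twoPoint, ae_add_measure_iff]
  constructor <;> refine Measure.ae_smul_measure ?_ _ <;> rw [ae_dirac_eq] <;> simp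

/-- A scalar value cannot be strictly within `a / 2` of both `0` and `a`, so the `q`-risk dominates the
overlap of the two weighted densities. -/
lemma twoPoint_bayes (q σ a γ : ℝ) (hq : 1 ≤ q) (hσ : 0 < σ) (ha : 0 < a)
    (T : ℝ → ℝ) (hT : Measurable T) :
    ENNReal.ofReal ((a / 2) ^ q)
        * ∫⁻ y, min (ENNReal.ofReal (1 - γ) * gaussianPDF 0 (σ ^ 2).toNNReal y)
            (ENNReal.ofReal γ * gaussianPDF a (σ ^ 2).toNNReal y)
      ≤ ∫⁻ b, ∫⁻ z, ENNReal.ofReal (|T (b + z) - b| ^ q) ∂(gauss 0 σ) ∂(twoPoint γ a) := by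
  have hshift : ∀ m : ℝ, ∫⁻ z, ENNReal.ofReal (|T (m + z) - m| ^ q) ∂(gauss 0 σ)
      = ∫⁻ y, gaussianPDF m (σ ^ 2).toNNReal y * ENNReal.ofReal (|T y - m| ^ q) := by
    intro m
    have h : ∫⁻ y, ENNReal.ofReal (|T y - m| ^ q) ∂(gauss m σ)
        = ∫⁻ z, ENNReal.ofReal (|T (m + z) - m| ^ q) ∂(gauss 0 σ) := by
      rw [gauss_eq_map m σ, lintegral_map (by fun_prop) (by fun_prop)]
    rw [← h, gauss_eq_withDensity m σ hσ,
      lintegral_withDensity_eq_lintegral_mul _ (measurable_gaussianPDF _ _) (by fun_prop)]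
    rfl
  have hg : ∀ m : ℝ, Measurable (gaussianPDF m (σ ^ 2).toNNReal) :=
    fun m => measurable_gaussianPDF _ _
  have hg0 := hg 0
  have hga := hg a
  rw [lintegral_twoPoint, hshift, hshift, ← lintegral_const_mul _ (by fun_prop),
    ← lintegral_const_mul _ (by fun_prop), ← lintegral_const_mul _ (by fun_prop),
    ← lintegral_add_left (by fun_prop)]
  refine lintegral_mono fun y => ?_
  rcases le_total (a / 2) |T y - 0| with h | h
  · refine le_trans ?_ le_self_add
    rw [← mul_assoc, mul_comm (ENNReal.ofReal _)]
    gcongr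
    exact min_le_left _ _
  · have h' : a / 2 ≤ |T y - a| := by
      rw [sub_zero, abs_le] at h
      rw [abs_sub_comm]
      exact le_trans (by linarith [h.2]) (le_abs_self _)
    refine le_trans ?_ le_add_self
    rw [← mul_assoc, mul_comm (ENNReal.ofReal _)]
    gcongr
    exact min_le_right _ _

lemma gauss_eq_map_stdG (σ : ℝ) : gauss 0 σ = stdG.map (fun x => σ * x) := by
  rw [stdG, gaussianReal_map_const_mul, gauss, mul_zero, mul_one]
  rfl

lemma ofReal_PgtS (σ t : ℝ) : ENNReal.ofReal (PgtS σ t) = gauss 0 σ (Set.Ioi t) := by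
  have h : gauss 0 σ (Set.Ioi t) = stdG {x | t < σ * x} := by
    rw [gauss_eq_map_stdG, Measure.map_apply (by fun_prop) measurableSet_Ioi]; rfl
  have hfin : stdG {x | t < σ * x} ≠ ∞ := by rw [← h]; exact measure_ne_top _ _
  rw [PgtS, ENNReal.ofReal_toReal hfin, h]

lemma ofReal_PgtS_sub (σ a t : ℝ) : ENNReal.ofReal (PgtS σ (a - t)) = gauss a σ (Set.Iio t) := by
  have hneg : gauss 0 σ (Set.Ioi (a - t)) = gauss 0 σ ((fun x => -x) ⁻¹' Set.Ioi (a - t)) := by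
    conv_lhs => rw [← gauss_map_neg σ]
    exact Measure.map_apply (by fun_prop) measurableSet_Ioi
  rw [ofReal_PgtS, gauss_eq_map a σ, Measure.map_apply (by fun_prop) measurableSet_Iio, hneg]
  congr 1
  ext x
  simp only [Set.mem_preimage, Set.mem_Ioi, Set.mem_Iio]
  constructor <;> intro h <;> linarith

/-- `t(a)` is the point where the two weighted densities cross. -/
lemma pdf_crossing (σ a : ℝ) (hσ : 0 < σ) (ha : 0 < a) (s p : ℕ) (hs : 1 ≤ s) (hsp : s < p)
    (y : ℝ) :
    ((p : ℝ) - s) * gaussianPDFReal 0 (σ ^ 2).toNNReal y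
        ≤ s * gaussianPDFReal a (σ ^ 2).toNNReal y ↔ tFun p s σ a ≤ y := by
  have hs' : (0 : ℝ) < s := by exact_mod_cast hs
  have hps : (s : ℝ) < p := by exact_mod_cast hsp
  have hr : 0 < (p : ℝ) / s - 1 := by
    rw [sub_pos, lt_div_iff₀ hs']; linarith
  set r := (p : ℝ) / s - 1 with hrdef
  have hpr : (p : ℝ) - s = s * r := by rw [hrdef]; field_simp
  have hσ2 : (((σ ^ 2).toNNReal : ℝ≥0) : ℝ) = σ ^ 2 := Real.coe_toNNReal _ (sq_nonneg σ)
  have hC : 0 < (√(2 * Real.pi * σ ^ 2))⁻¹ := by positivity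
  have hσ0 : σ ≠ 0 := hσ.ne'
  simp only [gaussianPDFReal, hσ2, hpr]
  rw [show (s : ℝ) * r * ((√(2 * Real.pi * σ ^ 2))⁻¹ * Real.exp (-(y - 0) ^ 2 / (2 * σ ^ 2)))
      = (s * (√(2 * Real.pi * σ ^ 2))⁻¹) * (r * Real.exp (-(y - 0) ^ 2 / (2 * σ ^ 2))) by ring,
    ← mul_assoc (s : ℝ) _ (Real.exp (-(y - a) ^ 2 / (2 * σ ^ 2))),
    mul_le_mul_iff_right₀ (by positivity)]
  nth_rewrite 1 [← Real.exp_log hr]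
  rw [← Real.exp_add, Real.exp_le_exp, tFun, ← hrdef]
  have e : y - (a / 2 + σ ^ 2 * Real.log r / a)
      = (σ ^ 2 / a) * (-(y - a) ^ 2 / (2 * σ ^ 2) - (Real.log r + -(y - 0) ^ 2 / (2 * σ ^ 2))) := by
    field_simp
    ring
  rw [← sub_nonneg, ← sub_nonneg (b := _ + _ / a), e, mul_nonneg_iff_of_pos_left (by positivity)]

/-- `ψ` is the integral of the pointwise minimum of the two weighted densities: thresholding at
`t(a)` is the Bayes test. Only the upper bound on `ψ` is needed. -/
lemma ofReal_psi_le (σ a : ℝ) (hσ : 0 < σ) (ha : 0 < a) (s p : ℕ) (hs : 1 ≤ s) (hsp : s < p) :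
    ENNReal.ofReal (psi p s σ a)
      ≤ ∫⁻ y, min (ENNReal.ofReal ((p : ℝ) - s) * gaussianPDF 0 (σ ^ 2).toNNReal y)
            (ENNReal.ofReal s * gaussianPDF a (σ ^ 2).toNNReal y) := by
  have hps : (s : ℝ) < p := by exact_mod_cast hsp
  have hd : (0 : ℝ) ≤ (p : ℝ) - s := by linarith
  have hs0 : (0 : ℝ) ≤ s := by positivity
  have hP : ∀ t, 0 ≤ PgtS σ t := fun t => ENNReal.toReal_nonneg
  set t := tFun p s σ a with ht
  have hg0 := measurable_gaussianPDF 0 (σ ^ 2).toNNReal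
  have hga := measurable_gaussianPDF a (σ ^ 2).toNNReal
  have hmul : ∀ (c m y : ℝ), 0 ≤ c → ENNReal.ofReal c * gaussianPDF m (σ ^ 2).toNNReal y
      = ENNReal.ofReal (c * gaussianPDFReal m (σ ^ 2).toNNReal y) := by
    intro c m y hc
    rw [gaussianPDF, ENNReal.ofReal_mul hc]
  rw [psi, ENNReal.ofReal_add (mul_nonneg hd (hP _)) (mul_nonneg hs0 (hP _)),
    ENNReal.ofReal_mul hd, ENNReal.ofReal_mul hs0, ofReal_PgtS, ofReal_PgtS_sub,
    gauss_eq_withDensity 0 σ hσ, gauss_eq_withDensity a σ hσ,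
    withDensity_apply _ measurableSet_Ioi, withDensity_apply _ measurableSet_Iio,
    ← lintegral_const_mul _ hg0, ← lintegral_const_mul _ hga]
  have h1 : ∫⁻ y in Set.Ioi t, ENNReal.ofReal ((p : ℝ) - s) * gaussianPDF 0 (σ ^ 2).toNNReal y
      = ∫⁻ y in Set.Ioi t, min (ENNReal.ofReal ((p : ℝ) - s) * gaussianPDF 0 (σ ^ 2).toNNReal y)
            (ENNReal.ofReal s * gaussianPDF a (σ ^ 2).toNNReal y) := by
    refine setLIntegral_congr_fun measurableSet_Ioi fun y hy => ?_
    refine (min_eq_left ?_).symm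
    rw [hmul _ _ _ hd, hmul _ _ _ hs0]
    exact ENNReal.ofReal_le_ofReal
      ((pdf_crossing σ a hσ ha s p hs hsp y).2 (le_of_lt (Set.mem_Ioi.1 hy)))
  have h2 : ∫⁻ y in Set.Iio t, ENNReal.ofReal s * gaussianPDF a (σ ^ 2).toNNReal y
      = ∫⁻ y in Set.Iio t, min (ENNReal.ofReal ((p : ℝ) - s) * gaussianPDF 0 (σ ^ 2).toNNReal y)
            (ENNReal.ofReal s * gaussianPDF a (σ ^ 2).toNNReal y) := by
    refine setLIntegral_congr_fun measurableSet_Iio fun y hy => ?_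
    refine (min_eq_right ?_).symm
    rw [hmul _ _ _ hd, hmul _ _ _ hs0]
    refine ENNReal.ofReal_le_ofReal (le_of_lt (lt_of_not_ge fun h => ?_))
    exact absurd ((pdf_crossing σ a hσ ha s p hs hsp y).1 h) (not_le.2 (Set.mem_Iio.1 hy))
  rw [h1, h2, ← lintegral_union measurableSet_Iio
    (Set.disjoint_left.2 fun y h h' => lt_asymm (Set.mem_Ioi.1 h) (Set.mem_Iio.1 h'))]
  exact setLIntegral_le_lintegral _ _

lemma psi_le (σ a : ℝ) (hσ : 0 < σ) (ha : 0 < a) (s p : ℕ) (hs : 1 ≤ s) (hsp : s < p) :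
    psi p s σ a ≤ s := by
  have h := ofReal_psi_le σ a hσ ha s p hs hsp
  have h2 : ∫⁻ y, min (ENNReal.ofReal ((p : ℝ) - s) * gaussianPDF 0 (σ ^ 2).toNNReal y)
            (ENNReal.ofReal s * gaussianPDF a (σ ^ 2).toNNReal y) ≤ ENNReal.ofReal s := by
    calc _ ≤ ∫⁻ y, ENNReal.ofReal s * gaussianPDF a (σ ^ 2).toNNReal y :=
          lintegral_mono fun y => min_le_right _ _
      _ = ENNReal.ofReal s := by
          rw [lintegral_const_mul _ (measurable_gaussianPDF _ _),
            lintegral_gaussianPDF_eq_one _ (by simpa using hσ.ne'), mul_one]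
  exact (ENNReal.ofReal_le_ofReal_iff (by positivity)).1 (h.trans h2)

/-- Chernoff bound at exponent `log 2` for the number of nonzero coordinates, a binomial variable
with mean `s / 2`: it is at least `s` with probability at most `2⁻ˢ e^{s/2} ≤ e^{-s/8}`. -/
lemma sparse_prob (a : ℝ) (ha : 0 < a) (s p : ℕ) (hs : 1 ≤ s) (hsp : s < p) :
    ENNReal.ofReal (1 - Real.exp (-(s : ℝ) / 8))
      ≤ Measure.pi (fun _ : Fin p => twoPoint ((s : ℝ) / (2 * p)) a) (sparseSet p (s - 1) a) := by
  have hs' : (0 : ℝ) < s := by exact_mod_cast hs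
  have hps : (s : ℝ) < p := by exact_mod_cast hsp
  have hp' : (0 : ℝ) < p := hs'.trans hps
  set γ := (s : ℝ) / (2 * p) with hγ
  have hγ0 : 0 ≤ γ := by positivity
  have hγ1 : γ ≤ 1 := by
    rw [hγ, div_le_one (by positivity)]; linarith
  have : IsProbabilityMeasure (twoPoint γ a) := twoPoint_isProbabilityMeasure γ a hγ0 hγ1
  set μ := Measure.pi (fun _ : Fin p => twoPoint γ a) with hμ
  set H := sparseSet p (s - 1) a with hH
  have hHm : MeasurableSet H := measurableSet_sparseSet p (s - 1) a
  let w : ℝ → ℝ≥0∞ := fun b => if b = 0 then 1 else 2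
  have hw : Measurable w :=
    Measurable.ite (measurableSet_singleton 0) measurable_const measurable_const
  have hae : ∀ᵐ β ∂μ, ∀ i, β i = 0 ∨ β i = a := by
    rw [ae_all_iff]
    intro i
    exact (Measure.tendsto_eval_ae_ae (μ := fun _ : Fin p => twoPoint γ a) (i := i)).eventually
      (ae_twoPoint γ a)
  have hprod : ∫⁻ β, ∏ i, w (β i) ∂μ ≤ ENNReal.ofReal (Real.exp ((s : ℝ) / 2)) := by
    have hind : iIndepFun (fun (i : Fin p) (β : Fin p → ℝ) => w (β i)) μ :=
      iIndepFun_pi (μ := fun _ : Fin p => twoPoint γ a) (X := fun _ => w)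
        (fun _ => hw.aemeasurable)
    have h1 := lintegral_prod_eq_prod_lintegral_of_indepFun Finset.univ
      (fun (i : Fin p) (β : Fin p → ℝ) => w (β i)) hind
      (fun i => hw.comp (measurable_pi_apply i))
    have h2 : ∀ i : Fin p, ∫⁻ β, w (β i) ∂μ = ENNReal.ofReal (1 + γ) := by
      intro i
      have h3 : ∫⁻ β, w (β i) ∂μ = ∫⁻ b, w b ∂(twoPoint γ a) :=
        (measurePreserving_eval (fun _ : Fin p => twoPoint γ a) i).lintegral_comp hw
      rw [h3, lintegral_twoPoint]
      simp only [w, if_true, if_neg ha.ne', mul_one]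
      rw [show (2 : ℝ≥0∞) = ENNReal.ofReal 2 by simp, ← ENNReal.ofReal_mul hγ0,
        ← ENNReal.ofReal_add (by linarith) (by positivity)]
      congr 1; ring
    rw [h1]
    simp_rw [h2]
    rw [Finset.prod_const, Finset.card_univ, Fintype.card_fin, ← ENNReal.ofReal_pow (by positivity)]
    refine ENNReal.ofReal_le_ofReal ?_
    calc (1 + γ) ^ p ≤ (Real.exp γ) ^ p := by
          gcongr; linarith [Real.add_one_le_exp γ]
      _ = Real.exp ((s : ℝ) / 2) := by
          rw [← Real.exp_nat_mul, hγ]; congr 1; field_simp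
  have hmarkov : (2 : ℝ≥0∞) ^ s * μ {β | (2 : ℝ≥0∞) ^ s ≤ ∏ i, w (β i)}
      ≤ ENNReal.ofReal (Real.exp ((s : ℝ) / 2)) := by
    refine le_trans (mul_meas_ge_le_lintegral₀ ?_ _) hprod
    exact (Finset.measurable_fun_prod _ fun i _ => hw.comp (measurable_pi_apply i)).aemeasurable
  have hsub : μ Hᶜ ≤ μ {β | (2 : ℝ≥0∞) ^ s ≤ ∏ i, w (β i)} := by
    refine measure_mono_ae ?_
    filter_upwards [hae] with β hβ hnot
    have hcard : s ≤ (Finset.univ.filter fun i => β i ≠ 0).card := by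
      by_contra hlt
      refine hnot ⟨by omega, fun i hi => ?_⟩
      rcases hβ i with h | h
      · exact absurd h hi
      · rw [h]; exact le_abs_self a
    show (2 : ℝ≥0∞) ^ s ≤ ∏ i, w (β i)
    have : ∏ i, w (β i) = 2 ^ (Finset.univ.filter fun i => β i ≠ 0).card := by
      simp only [w, Finset.prod_ite, Finset.prod_const, one_pow, one_mul]
    rw [this]
    exact pow_le_pow_right₀ (by norm_num) hcard
  have hbad : μ Hᶜ ≤ ENNReal.ofReal (Real.exp (-(s : ℝ) / 8)) := by
    have h2 : (2 : ℝ≥0∞) ^ s = ENNReal.ofReal ((2 : ℝ) ^ s) := by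
      rw [ENNReal.ofReal_pow (by norm_num)]; simp
    have h3 : (2 : ℝ≥0∞) ^ s * μ Hᶜ
        ≤ 2 ^ s * ENNReal.ofReal (Real.exp (-(s : ℝ) / 8)) := by
      refine (mul_le_mul_right hsub _).trans (hmarkov.trans ?_)
      rw [h2, ← ENNReal.ofReal_mul (by positivity)]
      refine ENNReal.ofReal_le_ofReal ?_
      have : (2 : ℝ) ^ s = Real.exp (s * Real.log 2) := by
        rw [Real.exp_nat_mul, Real.exp_log (by norm_num)]
      rw [this, ← Real.exp_add, Real.exp_le_exp]
      nlinarith [Real.log_two_gt_d9]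
    exact (ENNReal.mul_le_mul_iff_right (by positivity) (by finiteness)).1 h3
  have hone : μ H + μ Hᶜ = 1 := prob_add_prob_compl hHm
  rw [ENNReal.ofReal_sub _ (Real.exp_pos _).le, ENNReal.ofReal_one, ← hone]
  exact tsub_le_iff_right.2 (by gcongr)

/-- Lower bound from the prior with independent two-point coordinates of weight `s / (2p)`. -/
lemma minimax_ge_psi (q σ a : ℝ) (hq : 1 ≤ q) (hσ : 0 < σ) (ha : 0 < a)
    (s p : ℕ) (hs : 1 ≤ s) (hsp : s < p) :
    ENNReal.ofReal (a ^ q * (2 : ℝ) ^ (-(q + 1)) * psi p s σ a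
          - (s : ℝ) * a ^ q * Real.exp (-(s : ℝ) / 8)) ≤ minimax p s σ q a := by
  refine le_iInf₂ fun est hest => ?_
  have hs' : (0 : ℝ) < s := by exact_mod_cast hs
  have hps : (s : ℝ) < p := by exact_mod_cast hsp
  have hp' : (0 : ℝ) < p := hs'.trans hps
  set γ := (s : ℝ) / (2 * p) with hγ
  have hγ0 : 0 ≤ γ := by positivity
  have hγ1 : γ ≤ 1 := by
    rw [hγ, div_le_one (by positivity)]; linarith
  have : IsProbabilityMeasure (twoPoint γ a) := twoPoint_isProbabilityMeasure γ a hγ0 hγ1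
  set m := ∫⁻ y, min (ENNReal.ofReal (1 - γ) * gaussianPDF 0 (σ ^ 2).toNNReal y)
            (ENNReal.ofReal γ * gaussianPDF a (σ ^ 2).toNNReal y) with hm
  have main := sum_le_maxRisk p s σ q a est hest (fun _ => twoPoint γ a) (sparseSet p (s - 1) a)
    (measurableSet_sparseSet p (s - 1) a) (fun _ => ENNReal.ofReal ((a / 2) ^ q) * m) ?_
    (fun j T hT => twoPoint_bayes q σ a γ hq hσ ha T hT)
  · refine le_trans ?_ main
    -- At half the prior weight the overlap integral still carries half of `ψ`, because
    -- `p (1 - γ) = p - s / 2 ≥ (p - s) / 2` and `p γ = s / 2`.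
    have hψm : ENNReal.ofReal (psi p s σ a / 2) ≤ p * m := by
      have hg0 := measurable_gaussianPDF 0 (σ ^ 2).toNNReal
      have hga := measurable_gaussianPDF a (σ ^ 2).toNNReal
      rw [div_eq_inv_mul, ENNReal.ofReal_mul (by norm_num)]
      refine (mul_le_mul_right (ofReal_psi_le σ a hσ ha s p hs hsp) _).trans ?_
      rw [hm, ← lintegral_const_mul _ (by fun_prop), ← lintegral_const_mul _ (by fun_prop)]
      refine lintegral_mono fun y => ?_
      rw [← ENNReal.ofReal_natCast p]
      rw [mul_min, mul_min]
      simp only [← mul_assoc]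
      rw [← ENNReal.ofReal_mul (by norm_num), ← ENNReal.ofReal_mul (by norm_num),
        ← ENNReal.ofReal_mul (by positivity), ← ENNReal.ofReal_mul (by positivity)]
      have e1 : (p : ℝ) * γ = 2⁻¹ * s := by rw [hγ]; field_simp
      have e2 : (2 : ℝ)⁻¹ * (p - s) ≤ p * (1 - γ) := by
        rw [mul_sub (p : ℝ), e1]; linarith
      rw [e1]
      exact min_le_min (mul_le_mul_left (ENNReal.ofReal_le_ofReal e2) _) le_rfl
    rw [Finset.sum_const, Finset.card_univ, Fintype.card_fin, nsmul_eq_mul]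
    set E := Real.exp (-(s : ℝ) / 8) with hE
    have hE1 : E ≤ 1 := by
      rw [hE]; exact Real.exp_le_one_iff.2 (by linarith [hs'.le])
    have hE0 : 0 < E := Real.exp_pos _
    calc _ ≤ ENNReal.ofReal ((a / 2) ^ q * (psi p s σ a / 2) * (1 - E)) := by
          refine ENNReal.ofReal_le_ofReal ?_
          have hψ := psi_le σ a hσ ha s p hs hsp
          have h2q : (2 : ℝ) ^ (-(q + 1)) ≤ 1 :=
            Real.rpow_le_one_of_one_le_of_nonpos (by norm_num) (by linarith)
          have h2q0 : 0 < (2 : ℝ) ^ (-(q + 1)) := by positivity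
          have haq : 0 < a ^ q := by positivity
          have e : (a / 2) ^ q * (psi p s σ a / 2)
              = a ^ q * (2 : ℝ) ^ (-(q + 1)) * psi p s σ a := by
            rw [Real.div_rpow ha.le (by norm_num), Real.rpow_neg (by norm_num),
              Real.rpow_add (by norm_num), Real.rpow_one]
            field_simp
          rw [e]
          have h1 : (2 : ℝ) ^ (-(q + 1)) * psi p s σ a ≤ s := by
            nlinarith
          nlinarith [mul_le_mul_of_nonneg_left h1 (mul_pos haq hE0).le]
      _ = ENNReal.ofReal ((a / 2) ^ q) * ENNReal.ofReal (psi p s σ a / 2)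
            * ENNReal.ofReal (1 - E) := by
          rw [ENNReal.ofReal_mul' (by linarith), ENNReal.ofReal_mul (by positivity)]
      _ ≤ ENNReal.ofReal ((a / 2) ^ q) * (p * m)
            * Measure.pi (fun _ : Fin p => twoPoint γ a) (sparseSet p (s - 1) a) := by
          gcongr
          exact sparse_prob a ha s p hs hsp
      _ = _ := by ring
  · -- changing one coordinate adds at most one nonzero entry, hence the sparsity `s - 1`
    intro j β hβ
    filter_upwards [ae_twoPoint γ a] with b hb
    refine ⟨?_, fun i hi => ?_⟩
    · have hsubset : (Finset.univ.filter fun i => Function.update β j b i ≠ 0)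
          ⊆ insert j (Finset.univ.filter fun i => β i ≠ 0) := by
        intro i hi
        by_cases h : i = j
        · simp [h]
        · simpa [h, Function.update_of_ne h] using hi
      have h1 := (Finset.card_le_card hsubset).trans (Finset.card_insert_le _ _)
      have h2 := hβ.1
      omega
    · by_cases h : i = j
      · subst h
        rw [Function.update_self] at hi ⊢
        rcases hb with hb | hb
        · exact absurd hb hi
        · rw [hb]; exact le_abs_self a
      · rw [Function.update_of_ne h] at hi ⊢
        exact hβ.2 i hi

/-- Combined lower bound on the minimax risk:
`inf sup ≥ max(s σ_q^q, a^q 2^{−(q+1)} ψ(p,s,a,σ) − s a^q e^{−s/8})`. -/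
theorem stmt_17 (q σ a : ℝ) (hq : 1 ≤ q) (hσ : 0 < σ) (ha : 0 < a)
    (s p : ℕ) (hs : 1 ≤ s) (hsp : s < p) :
    ENNReal.ofReal (max ((s : ℝ) * sigmaqq σ q)
        (a ^ q * (2 : ℝ) ^ (-(q + 1)) * psi p s σ a
          - (s : ℝ) * a ^ q * Real.exp (-(s : ℝ) / 8)))
      ≤ minimax p s σ q a := by
  rw [ENNReal.ofReal_max]
  exact max_le (minimax_ge_sigmaqq q σ a hq s p hsp) (minimax_ge_psi q σ a hq hσ ha s p hs hsp)

end
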